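/- For every signed multigraph (G,σ), the chromatic index satisfies χ'(G,σ) ≤ ⌊(3/2)·Δ(G)⌋, where Δ(G) is the maximum degree of G. -/

import Mathlib

/-!
Write `Δ` for the maximum degree and `N = ⌊3Δ/2⌋`. If some loop is negative, its two half-edges
always carry the same value, so there is no colouring at all and `chiSub`, an infimum of the empty
set, is `0`. Otherwise the symmetric set with `N` elements and at most one self-inverse element
suffices, by a signed version of the classical proof of Shannon's theorem.

It is convenient to forget the bidirection: colours form a finite set `X` with an involution `neg`
having at most one fixed point, and an edge whose half-edge at one end has the value `x` has the
value `nu e x` at the other end, where `nu e` is the identity for a negative edge and `neg` for a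
positive one; loops are positive. This is `SignedData`, and `SignedData.exists_proper` is the
theorem in this language.

Take a properly coloured set `D` of edges of maximal weight, where loops count `2` and other edges
count `1`. An uncoloured loop could be coloured with a missing `z`, after uncolouring at most one
edge that is not a loop, so all loops are in `D` (`IsMax.loop_mem`). Let `e = uv` be an edge outside
`D`. Let `A` be the set of colours missing at `u`, and `B` the set of those missing at `v`,
transported to `u` by `nu e`. They are disjoint, as otherwise `e` could be coloured. Let `α ∈ B`,
and let `f = uw` be the edge with value `α` at `u`, with `w ≠ u, v`. Let `C` be the set of colours
missing at `w`, transported to `u` by `nu f`. Then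

* `A` and `C` are disjoint: move the colour `α` from `f` to `e`; now `f` is the uncoloured edge
  (`IsMax.shift_disjoint`);
* `B` and `C` are disjoint: if `a` is in both and `x ∈ A`, exchange `x` with `a` and `-x` with `-a`
  on the Kempe component of `(u, x)`. A Kempe component has at most two ends (`no_three_ends`), so
  it misses `v` or `w`, and after the exchange `a` is missing at `u` and still at one of `v`, `w`,
  contrary to what was shown already (`IsMax.no_config`).

Since `|A|, |B| ≥ N - Δ + 1` and `|C| ≥ N - Δ`, the three sets have more than `N` elements in total,
a contradiction. The exchange must leave `α` in place, and `w` must differ from `u` and `v`.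
For this, a self-inverse colour is first shown to be missing at neither end of `e`
(`IsMax.no_zero`), and further Kempe exchanges produce a colouring in which one of the ends, say
`v`, misses no pair `±y` (`IsMax.exists_noPair`). Then for each `α ∈ B` the edge `f` is a loop or
parallel to `e`. The latter happens for at most one `α` (`IsMax.no_two_parallel`), and a loop with
value `α` at `u` also has the value `-α` there, so that the negatives of all but at most one
element of `B` are outside `A ∪ B`, and counting gives a contradiction again (`IsMax.not_noPair`).
-/

/-- A multigraph on vertex type `V` with edge type `E`.  Each edge `e` has two
half-edges, indexed by `Bool`; `ends e b` is the vertex incident to the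
half-edge `(e, b)`.  Loops (`ends e true = ends e false`) and parallel edges
are allowed. -/
structure Multigraph (V E : Type*) where
  ends : E → Bool → V

/-- The symmetric set `S^t_{2k}`: `t` self-inverse colors `0_1, …, 0_t`
(the elements `Sum.inl i`) and `k` pairs `±s_1, …, ±s_k` of non-self-inverse
colors (the elements `Sum.inr (i, b)`). -/
abbrev SymColor (t k : ℕ) := Fin t ⊕ (Fin k × Bool)

/-- Negation on a symmetric set: self-inverse elements are fixed,
and `s_i = Sum.inr (i, true)` is interchanged with `-s_i = Sum.inr (i, false)`. -/
def symNeg {t k : ℕ} : SymColor t k → SymColor t k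
  | Sum.inl a => Sum.inl a
  | Sum.inr (i, b) => Sum.inr (i, !b)

/-- The signature induced by a bidirection `τ`: `σ(e) = -(τ(h_e(v))·τ(h_e(w)))`. -/
def signOf {E : Type*} (τ : E → Bool → ℤˣ) (e : E) : ℤˣ :=
  -(τ e true * τ e false)

/-- The value `τ(h_e(v))·c(e)` of the half-edge `(e, b)` under a coloring `c`
with respect to the bidirection `τ`. -/
def hval {E : Type*} {t k : ℕ} (τ : E → Bool → ℤˣ) (c : E → SymColor t k)
    (e : E) (b : Bool) : SymColor t k :=
  if τ e b = 1 then c e else symNeg (c e)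

namespace Multigraph

variable {V E : Type*} [Fintype V] [Fintype E] [DecidableEq V] [DecidableEq E]

/-- The degree of a vertex: the number of half-edges incident to it
(a loop contributes `2`). -/
def degree (G : Multigraph V E) (v : V) : ℕ :=
  (Finset.univ.filter fun h : E × Bool => G.ends h.1 h.2 = v).card

/-- The maximum degree `Δ(G)`. -/
def maxDegree (G : Multigraph V E) : ℕ :=
  Finset.univ.sup fun v => G.degree v

/-- The degree of a vertex in the spanning subgraph with edge set `S`. -/
def degOn (G : Multigraph V E) (S : Finset E) (v : V) : ℕ :=
  (Finset.univ.filter fun h : E × Bool => h.1 ∈ S ∧ G.ends h.1 h.2 = v).card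

/-- `v` is incident with an edge of `S`. -/
def IncidentOn (G : Multigraph V E) (S : Finset E) (v : V) : Prop :=
  ∃ e ∈ S, ∃ b, G.ends e b = v

/-- Two vertices joined by an edge of `S`. -/
def AdjOn (G : Multigraph V E) (S : Finset E) (u w : V) : Prop :=
  ∃ e ∈ S, (G.ends e true = u ∧ G.ends e false = w) ∨
    (G.ends e true = w ∧ G.ends e false = u)

/-- The edge set `S` forms a circuit: it is nonempty, the subgraph it induces
is `2`-regular, and it is connected. -/
def IsCircuit (G : Multigraph V E) (S : Finset E) : Prop :=
  S.Nonempty ∧ (∀ v, G.IncidentOn S v → G.degOn S v = 2) ∧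
    ∀ u w, G.IncidentOn S u → G.IncidentOn S w →
      Relation.ReflTransGen (G.AdjOn S) u w

/-- A signed multigraph `(G, σ)` is balanced if every circuit is positive. -/
def IsBalanced (G : Multigraph V E) (σ : E → ℤˣ) : Prop :=
  ∀ S : Finset E, G.IsCircuit S → ∏ e ∈ S, σ e = 1

/-- Resigning a signature at a vertex `v`: every non-loop edge incident with
`v` changes its sign; loops at `v` and edges not incident with `v` are
unchanged. -/
def resign (G : Multigraph V E) (σ : E → ℤˣ) (v : V) : E → ℤˣ := fun e =>
  (if G.ends e true = v then -1 else 1) * σ e *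
    (if G.ends e false = v then -1 else 1)

/-- Two signatures are equivalent if one is obtained from the other by a
(finite) sequence of resignings at vertices. -/
def Equivalent (G : Multigraph V E) (σ₁ σ₂ : E → ℤˣ) : Prop :=
  Relation.ReflTransGen (fun σ σ' => ∃ v, σ' = G.resign σ v) σ₁ σ₂

/-- `c` is an `S^t_{2k}`-coloring of `(G, σ)` with bidirection `τ` (where
`σ = signOf τ`): any two distinct half-edges incident with the same vertex
receive distinct values `τ(h)·c(e)`. -/
def IsProperColoring (G : Multigraph V E) (τ : E → Bool → ℤˣ) {t k : ℕ}
    (c : E → SymColor t k) : Prop :=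
  ∀ e₁ b₁ e₂ b₂, ((e₁, b₁) : E × Bool) ≠ (e₂, b₂) →
    G.ends e₁ b₁ = G.ends e₂ b₂ → hval τ c e₁ b₁ ≠ hval τ c e₂ b₂

/-- `(G, σ)` admits an `S^t_{2k}`-coloring (with respect to some bidirection
inducing `σ`). -/
def HasColoring (G : Multigraph V E) (σ : E → ℤˣ) (t k : ℕ) : Prop :=
  ∃ τ : E → Bool → ℤˣ, (∀ e, σ e = signOf τ e) ∧
    ∃ c : E → SymColor t k, G.IsProperColoring τ c

/-- `χ'_i(G, σ)`: the minimum `2k + i` such that `(G, σ)` admits an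
`S^i_{2k}`-coloring. -/
noncomputable def chiSub (G : Multigraph V E) (σ : E → ℤˣ) (i : ℕ) : ℕ :=
  sInf {n : ℕ | ∃ k, n = 2 * k + i ∧ G.HasColoring σ i k}

/-- The chromatic index `χ'(G, σ) = min{χ'_0(G, σ), χ'_1(G, σ)}`. -/
noncomputable def chromaticIndex (G : Multigraph V E) (σ : E → ℤˣ) : ℕ :=
  min (G.chiSub σ 0) (G.chiSub σ 1)

/-- A matching: a set of pairwise non-adjacent non-loop edges. -/
def IsMatching (G : Multigraph V E) (M : Finset E) : Prop :=
  (∀ e ∈ M, G.ends e true ≠ G.ends e false) ∧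
    ∀ e₁ ∈ M, ∀ e₂ ∈ M, e₁ ≠ e₂ → ∀ b₁ b₂, G.ends e₁ b₁ ≠ G.ends e₂ b₂

end Multigraph

/-! ### Components of a graph of maximum degree two -/

/-- A connected component of a finite graph of maximum degree at most `2` contains at most two
vertices of degree at most `1`: a connected graph on `n` vertices has at least `n - 1` edges, hence
degree sum at least `2n - 2`. -/
theorem no_three_ends {P : Type*} [Finite P] (H : SimpleGraph P)
    (h2 : ∀ p, ∃ q r, ∀ s, H.Adj p s → s = q ∨ s = r) {p₁ p₂ p₃ : P}
    (h₁ : ∃ q, ∀ s, H.Adj p₁ s → s = q) (h₂ : ∃ q, ∀ s, H.Adj p₂ s → s = q)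
    (h₃ : ∃ q, ∀ s, H.Adj p₃ s → s = q) (h₁₂ : p₁ ≠ p₂) (h₁₃ : p₁ ≠ p₃) (h₂₃ : p₂ ≠ p₃)
    (r₂ : H.Reachable p₁ p₂) (r₃ : H.Reachable p₁ p₃) : False := by
  classical
  have := Fintype.ofFinite P
  set C := H.connectedComponentMk p₁ with hC
  have hconn : C.toSimpleGraph.Connected := C.connected_toSimpleGraph
  have hedge := hconn.card_vert_le_card_edgeSet_add_one
  have hsum := C.toSimpleGraph.sum_degrees_eq_twice_card_edges
  have m₁ : p₁ ∈ C.supp := by simp [hC]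
  have m₂ : p₂ ∈ C.supp := by simpa [hC] using r₂.symm
  have m₃ : p₃ ∈ C.supp := by simpa [hC] using r₃.symm
  let S : Finset C := {⟨p₁, m₁⟩, ⟨p₂, m₂⟩, ⟨p₃, m₃⟩}
  have hS : S.card = 3 := by
    simp only [S]
    rw [Finset.card_eq_three]
    exact ⟨_, _, _, by simpa using h₁₂, by simpa using h₁₃, by simpa using h₂₃, rfl⟩
  have hdeg : ∀ p : C, C.toSimpleGraph.degree p + (if p ∈ S then 1 else 0) ≤ 2 := by
    intro p
    have hle : ∀ T : Finset P, (∀ s, H.Adj p s → s ∈ T) → C.toSimpleGraph.degree p ≤ T.card := by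
      intro T hT
      rw [← SimpleGraph.card_neighborFinset_eq_degree]
      refine Finset.card_le_card_of_injOn (fun s => (s : P)) ?_ (Subtype.val_injective.injOn)
      intro s hs
      have hs' : C.toSimpleGraph.Adj p s := by simpa using hs
      exact hT s hs'
    split_ifs with hp
    · have : ∃ q, ∀ s, H.Adj p s → s = q := by
        simp only [S, Finset.mem_insert, Finset.mem_singleton] at hp
        rcases hp with rfl | rfl | rfl <;> assumption
      obtain ⟨q, hq⟩ := this
      have := hle {q} (by simpa using hq)
      simp at this
      omega
    · obtain ⟨q, r, hq⟩ := h2 p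
      have := hle {q, r} (by simpa using hq)
      have := Finset.card_le_two (a := q) (b := r)
      omega
  have htot := Finset.sum_le_sum fun p (_ : p ∈ Finset.univ) => hdeg p
  rw [Finset.sum_add_distrib, hsum] at htot
  simp only [Finset.sum_ite_mem, Finset.univ_inter, Finset.sum_const, Finset.card_univ, hS,
    smul_eq_mul] at htot
  rw [Nat.card_eq_fintype_card, Nat.card_eq_fintype_card, ← SimpleGraph.edgeFinset_card] at hedge
  omega

/-! ### Signed multigraphs with abstract colours -/

theorem eq_not_of_ne {b b' : Bool} (h : b ≠ b') : b = !b' := by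
  cases b <;> cases b' <;> simp_all

/-- A signed multigraph without negative loops, together with a set `X` of colours on which `neg` is
an involution with at most one fixed point. The two half-edges of `e` are indexed by `Bool`;
whenever one of them has value `x`, the other one has value `nu e x`. So `nu e` is the identity if
`e` is negative and `neg` if `e` is positive. -/
structure SignedData (V E X : Type*) where
  ends : E → Bool → V
  neg : X → X
  nu : E → X → X
  neg_neg : ∀ x, neg (neg x) = x
  fix_unique : ∀ x y, neg x = x → neg y = y → x = y
  nu_or : ∀ e, (∀ x, nu e x = x) ∨ ∀ x, nu e x = neg x
  nu_loop : ∀ e, ends e true = ends e false → ∀ x, nu e x = neg x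

set_option linter.unusedSectionVars false

namespace SignedData

variable {V E X : Type*} [Fintype V] [Fintype E] [Fintype X]
  [DecidableEq V] [DecidableEq E] [DecidableEq X] (S : SignedData V E X)

theorem nu_nu (e : E) (x : X) : S.nu e (S.nu e x) = x := by
  rcases S.nu_or e with h | h <;> simp [h, S.neg_neg]

theorem nu_neg (e : E) (x : X) : S.nu e (S.neg x) = S.neg (S.nu e x) := by
  rcases S.nu_or e with h | h <;> simp [h]

theorem nu_of_loop {e : E} {b : Bool} (h : S.ends e b = S.ends e !b) (x : X) :
    S.nu e x = S.neg x := by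
  cases b
  · exact S.nu_loop e h.symm x
  · exact S.nu_loop e h x

theorem nu_fix (e : E) {x : X} (h : S.neg x = x) : S.nu e x = x := by
  rcases S.nu_or e with hnu | hnu <;> simp [h, hnu]

/-- The colour of `e` for which the half-edge `(e, b)` has value `x`; equivalently, the value of
`(e, b)` if `e` has colour `x`. The colour of an edge is the value of its half-edge `(e, true)`. -/
def put (e : E) (b : Bool) (x : X) : X := if b then x else S.nu e x

/-- The value of the half-edge `(e, b)` under the colouring `c`. -/
def val (c : E → X) (e : E) (b : Bool) : X := S.put e b (c e)

theorem put_put (e : E) (b : Bool) (x : X) : S.put e b (S.put e b x) = x := by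
  cases b <;> simp [put, S.nu_nu]

theorem put_not (e : E) (b : Bool) (x : X) : S.put e (!b) x = S.nu e (S.put e b x) := by
  cases b <;> simp [put, S.nu_nu]

theorem val_not (c : E → X) (e : E) (b : Bool) : S.val c e (!b) = S.nu e (S.val c e b) :=
  S.put_not e b (c e)

theorem val_update_self (c : E → X) (e : E) (b : Bool) (x : X) :
    S.val (Function.update c e (S.put e b x)) e b = x := by
  simp [val, S.put_put]

theorem val_update_self_not (c : E → X) (e : E) (b : Bool) (x : X) :
    S.val (Function.update c e (S.put e b x)) e (!b) = S.nu e x := by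
  rw [val_not, val_update_self]

theorem val_update_of_ne (c : E → X) {e f : E} (h : f ≠ e) (b : Bool) (y : X) :
    S.val (Function.update c e y) f b = S.val c f b := by
  simp [val, h]

/-- `c` is proper on the set `D` of edges: distinct half-edges of edges in `D` have distinct values
whenever they meet in a vertex. Edges outside `D` count as uncoloured, whatever `c` is there. -/
def Proper (D : Finset E) (c : E → X) : Prop :=
  ∀ e b e' b', e ∈ D → e' ∈ D → S.ends e b = S.ends e' b' → S.val c e b = S.val c e' b' →
    e = e' ∧ b = b'

open Classical in
/-- The set of values missing at the vertex `t`. -/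
noncomputable def miss (D : Finset E) (c : E → X) (t : V) : Finset X :=
  Finset.univ.filter fun x => ∀ e ∈ D, ∀ b, S.ends e b = t → S.val c e b ≠ x

theorem mem_miss {D : Finset E} {c : E → X} {t : V} {x : X} :
    x ∈ S.miss D c t ↔ ∀ e ∈ D, ∀ b, S.ends e b = t → S.val c e b ≠ x := by
  simp [miss]

theorem exists_of_not_mem_miss {D : Finset E} {c : E → X} {t : V} {x : X}
    (h : x ∉ S.miss D c t) : ∃ e ∈ D, ∃ b, S.ends e b = t ∧ S.val c e b = x := by
  rw [mem_miss] at h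
  push Not at h
  exact h

/-- The number of edges in `D`, with loops counted twice. -/
def weight (D : Finset E) : ℕ := ∑ e ∈ D, if S.ends e true = S.ends e false then 2 else 1

/-- `c` is a proper partial colouring, with domain `D`, of maximal weight. -/
def IsMax (D : Finset E) (c : E → X) : Prop :=
  S.Proper D c ∧ ∀ D' c', S.Proper D' c' → S.weight D' ≤ S.weight D

theorem loop_iff (e : E) (b : Bool) :
    S.ends e b = S.ends e (!b) ↔ S.ends e true = S.ends e false := by
  cases b
  · exact eq_comm
  · rfl

variable {S}

theorem Proper.mono {D D' : Finset E} {c : E → X} (h : S.Proper D c) (hD : D' ⊆ D) :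
    S.Proper D' c := fun e b e' b' he he' => h e b e' b' (hD he) (hD he')

/-- An uncoloured edge `e` can be coloured such that `(e, b)` has value `x` if `x` and `nu e x` are
missing at the respective ends (and differ, in case `e` is a loop). -/
theorem Proper.insert {D : Finset E} {c : E → X} (h : S.Proper D c) {e : E} (he : e ∉ D)
    (b : Bool) {x : X} (hx : x ∈ S.miss D c (S.ends e b))
    (hx' : S.nu e x ∈ S.miss D c (S.ends e !b))
    (hl : S.ends e b = S.ends e (!b) → x ≠ S.nu e x) :
    S.Proper (insert e D) (Function.update c e (S.put e b x)) := by
  have key : ∀ f ∈ D, ∀ b' b'', S.ends f b' = S.ends e b'' →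
      S.val c f b' ≠ S.val (Function.update c e (S.put e b x)) e b'' := by
    intro f hf b' b'' hff
    rcases eq_or_ne b'' b with rfl | hb
    · rw [S.val_update_self]
      exact S.mem_miss.1 hx f hf b' hff
    · obtain rfl : b'' = !b := eq_not_of_ne hb
      rw [S.val_update_self_not]
      exact S.mem_miss.1 hx' f hf b' hff
  intro e₁ b₁ e₂ b₂ h₁ h₂ hends hval
  rw [Finset.mem_insert] at h₁ h₂
  by_cases k₁ : e₁ = e <;> by_cases k₂ : e₂ = e
  · subst k₁ k₂
    refine ⟨rfl, ?_⟩
    by_contra hb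
    have hloop : S.ends e₂ b = S.ends e₂ !b := by
      cases b <;> cases b₁ <;> cases b₂ <;> simp_all
    apply hl hloop
    have a1 := S.val_update_self c e₂ b x
    have a2 := S.val_update_self_not c e₂ b x
    have hcase : (b₁ = b ∧ b₂ = !b) ∨ (b₂ = b ∧ b₁ = !b) := by
      rcases eq_or_ne b₁ b with rfl | hb₁
      · exact Or.inl ⟨rfl, eq_not_of_ne (Ne.symm hb)⟩
      · refine Or.inr ⟨?_, eq_not_of_ne hb₁⟩
        by_contra hb₂
        exact hb ((eq_not_of_ne hb₁).trans (eq_not_of_ne hb₂).symm)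
    rcases hcase with ⟨rfl, rfl⟩ | ⟨rfl, rfl⟩
    · exact (a1.symm.trans hval).trans a2
    · exact (a1.symm.trans hval.symm).trans a2
  · subst k₁
    rw [S.val_update_of_ne c k₂] at hval
    exact absurd hval.symm (key e₂ (h₂.resolve_left k₂) b₂ b₁ hends.symm)
  · subst k₂
    rw [S.val_update_of_ne c k₁] at hval
    exact absurd hval (key e₁ (h₁.resolve_left k₁) b₁ b₂ hends)
  · rw [S.val_update_of_ne c k₁, S.val_update_of_ne c k₂] at hval
    exact h e₁ b₁ e₂ b₂ (h₁.resolve_left k₁) (h₂.resolve_left k₂) hends hval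

theorem weight_insert {D : Finset E} {e : E} (he : e ∉ D) :
    S.weight (insert e D) = (if S.ends e true = S.ends e false then 2 else 1) + S.weight D := by
  simp [weight, he]

theorem weight_erase {D : Finset E} {e : E} (he : e ∈ D) :
    S.weight (D.erase e) + (if S.ends e true = S.ends e false then 2 else 1) = S.weight D := by
  simp [weight, Finset.sum_erase_add, he]

theorem IsMax.not_extend {D : Finset E} {c : E → X} (h : S.IsMax D c) {e : E} (he : e ∉ D)
    (b : Bool) {x : X} (hx : x ∈ S.miss D c (S.ends e b))
    (hx' : S.nu e x ∈ S.miss D c (S.ends e !b))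
    (hl : S.ends e b = S.ends e (!b) → x ≠ S.nu e x) : False := by
  have := h.2 _ _ (h.1.insert he b hx hx' hl)
  rw [weight_insert he] at this
  split_ifs at this <;> omega

theorem Proper.mem_miss_erase {D : Finset E} {c : E → X} (h : S.Proper D c) {f : E} {b : Bool}
    (hf : f ∈ D) : S.val c f b ∈ S.miss (D.erase f) c (S.ends f b) := by
  rw [mem_miss]
  intro g hg b' hgb hv
  exact (Finset.mem_erase.1 hg).1 (h g b' f b (Finset.mem_of_mem_erase hg) hf hgb hv).1

theorem miss_subset_erase {D : Finset E} {c : E → X} (f : E) (t : V) :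
    S.miss D c t ⊆ S.miss (D.erase f) c t := by
  intro x hx
  rw [mem_miss] at hx ⊢
  exact fun g hg => hx g (Finset.mem_of_mem_erase hg)

/-- The values occurring at `t` correspond to the coloured half-edges at `t`. -/
theorem Proper.card_miss {D : Finset E} {c : E → X} (h : S.Proper D c) (t : V) :
    (S.miss D c t).card +
      (Finset.univ.filter fun p : E × Bool => p.1 ∈ D ∧ S.ends p.1 p.2 = t).card =
      Fintype.card X := by
  classical
  have hinj : Set.InjOn (fun p : E × Bool => S.val c p.1 p.2)
      (Finset.univ.filter fun p : E × Bool => p.1 ∈ D ∧ S.ends p.1 p.2 = t : Finset (E × Bool)) := by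
    rintro ⟨e, b⟩ hp ⟨e', b'⟩ hq hv
    simp only [Finset.coe_filter, Finset.mem_univ, true_and, Set.mem_ofPred_eq] at hp hq
    exact Prod.ext_iff.2 (h e b e' b' hp.1 hq.1 (hp.2.trans hq.2.symm) hv)
  rw [← Finset.card_image_of_injOn hinj, ← Finset.card_add_card_compl (S.miss D c t)]
  congr 2
  ext x
  rw [Finset.mem_compl, mem_miss]
  simp only [Finset.mem_image, Finset.mem_filter, Finset.mem_univ, true_and, Prod.exists]
  push Not
  constructor
  · rintro ⟨e, b, ⟨h1, h2⟩, h3⟩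
    exact ⟨e, h1, b, h2, h3⟩
  · rintro ⟨e, h1, b, h2, h3⟩
    exact ⟨e, b, ⟨h1, h2⟩, h3⟩

/-- Moving the colour `α` from `f = uw` to the uncoloured edge `e = uv`, when `nu e α` is missing at
`v`: the result is again maximal, because neither `e` nor `f` is a loop. -/
theorem IsMax.shift {D : Finset E} {c : E → X} (h : S.IsMax D c) {e f : E} {b b' : Bool} {α : X}
    (he : e ∉ D) (hnl : S.ends e b ≠ S.ends e !b) (hα : S.nu e α ∈ S.miss D c (S.ends e !b))
    (hf : f ∈ D) (hfe : S.ends f b' = S.ends e b) (hfα : S.val c f b' = α)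
    (hfl : S.ends f b' ≠ S.ends f !b') :
    S.IsMax (insert e (D.erase f)) (Function.update c e (S.put e b α)) := by
  have he' : e ∉ D.erase f := fun h => he (Finset.mem_of_mem_erase h)
  have h1 := Proper.insert (h.1.mono (D.erase_subset f)) he' b
    (by rw [← hfα, ← hfe]; exact h.1.mem_miss_erase hf) (miss_subset_erase f _ hα)
    (fun h => absurd h hnl)
  refine ⟨h1, fun D' c' h' => (h.2 D' c' h').trans ?_⟩
  rw [weight_insert he', ← weight_erase hf, if_neg ((S.loop_iff e b).not.1 hnl),
    if_neg ((S.loop_iff f b').not.1 hfl), add_comm]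

/-- If `e = uv` is uncoloured and `f = uw` has at `u` a value `α` with `nu e α` missing at `v`, then
no `x` missing at `u` has `nu f x` missing at `w`: after the shift `f` could be coloured. -/
theorem IsMax.shift_disjoint {D : Finset E} {c : E → X} (h : S.IsMax D c) {e f : E} {b b' : Bool}
    {α x : X} (he : e ∉ D) (hnl : S.ends e b ≠ S.ends e !b)
    (hα : S.nu e α ∈ S.miss D c (S.ends e !b))
    (hf : f ∈ D) (hfe : S.ends f b' = S.ends e b) (hfα : S.val c f b' = α)
    (hfl : S.ends f b' ≠ S.ends f !b') (hfv : S.ends f (!b') ≠ S.ends e !b)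
    (hx : x ∈ S.miss D c (S.ends e b)) : S.nu f x ∉ S.miss D c (S.ends f !b') := by
  intro hx'
  have hef : f ≠ e := fun h => he (h ▸ hf)
  have h' := h.shift he hnl hα hf hfe hfα hfl
  refine h'.not_extend (e := f) (b := b') (x := x) (by simp [hef]) ?_ ?_ (fun h => absurd h hfl)
  · rw [mem_miss] at hx ⊢
    intro g hg b₁ hgb
    rcases Finset.mem_insert.1 hg with rfl | hg
    · obtain rfl : b₁ = b := by
        by_contra hb
        obtain rfl : b₁ = !b := eq_not_of_ne hb
        exact hnl (hfe ▸ hgb.symm)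
      rw [S.val_update_self, ← hfα]
      exact hx f hf b' hfe
    · have hg := Finset.mem_of_mem_erase hg
      rw [S.val_update_of_ne c (ne_of_mem_of_not_mem hg he)]
      exact hx g hg b₁ (hgb.trans hfe)
  · rw [mem_miss] at hx' ⊢
    intro g hg b₁ hgb
    rcases Finset.mem_insert.1 hg with rfl | hg
    · exfalso
      rcases eq_or_ne b₁ b with rfl | hb
      · exact hfl (hfe.trans hgb)
      · obtain rfl : b₁ = !b := eq_not_of_ne hb
        exact hfv hgb.symm
    · have hg := Finset.mem_of_mem_erase hg
      rw [S.val_update_of_ne c (ne_of_mem_of_not_mem hg he)]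
      exact hx' g hg b₁ hgb

/-! ### Kempe exchanges -/

/-- The involution of the colours that exchanges `c` with `a` and `-c` with `-a`. -/
theorem exists_swap (S : SignedData V E X) {a c : X} (ha : S.neg a ≠ a) (hc : S.neg c ≠ c) :
    ∃ π : X → X, (∀ x, π (π x) = x) ∧ (∀ x, π (S.neg x) = S.neg (π x)) ∧ π c = a ∧
      ∀ x, x ≠ a → x ≠ c → x ≠ S.neg a → x ≠ S.neg c → π x = x := by
  have hn := S.neg_neg
  refine ⟨fun x => if x = c then a else if x = a then c else if x = S.neg c then S.neg a else
    if x = S.neg a then S.neg c else x, ?_, ?_, ?_, ?_⟩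
  · grind
  · grind
  · simp
  · grind

/-- The graph on pairs (vertex, value) in which `(t, x)` is joined to `(t, π x)`, and in which the two
half-edges of each coloured edge, regarded as such pairs, are joined. If `c` is proper on `D` and
`π` is an involution, then this graph has maximum degree at most `2`. -/
def kempeGraph (S : SignedData V E X) (D : Finset E) (c : E → X) (π : X → X) :
    SimpleGraph (V × X) :=
  SimpleGraph.fromRel fun p q => (p.1 = q.1 ∧ q.2 = π p.2) ∨
    ∃ e ∈ D, ∃ b, p = (S.ends e b, S.val c e b) ∧ q = (S.ends e !b, S.val c e !b)

theorem kempeGraph_adj {D : Finset E} {c : E → X} {π : X → X} (hπ : ∀ x, π (π x) = x)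
    {p q : V × X} : (S.kempeGraph D c π).Adj p q ↔ p ≠ q ∧ (q = (p.1, π p.2) ∨
    ∃ e ∈ D, ∃ b, p = (S.ends e b, S.val c e b) ∧ q = (S.ends e !b, S.val c e !b)) := by
  obtain ⟨t, x⟩ := p
  obtain ⟨s, y⟩ := q
  simp only [kempeGraph, SimpleGraph.fromRel_adj]
  refine and_congr_right fun _ => ⟨?_, ?_⟩
  · rintro ((⟨h1, h2⟩ | h) | (⟨h1, h2⟩ | ⟨e, he, b, h1, h2⟩))
    · exact Or.inl (by simp_all)
    · exact Or.inr h
    · exact Or.inl (by simp_all)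
    · exact Or.inr ⟨e, he, !b, by simpa using h2, by simpa using h1⟩
  · rintro (h | h)
    · exact Or.inl (Or.inl (by simp_all))
    · exact Or.inl (Or.inr h)

/-- Kempe exchange: `π` is applied to all values in the connected component `K` of `p` in the Kempe
graph. The pair `p` is missing, hence an end of its component, and so at most one further missing
pair lies in `K`. -/
theorem IsMax.kempe {D : Finset E} {c : E → X} (h : S.IsMax D c) {π : X → X}
    (hπ : ∀ x, π (π x) = x) (hneg : ∀ x, π (S.neg x) = S.neg (π x)) (p : V × X)
    (hp : p.2 ∈ S.miss D c p.1) :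
    ∃ (K : Set (V × X)) (c' : E → X), S.IsMax D c' ∧ p ∈ K ∧
      (∀ t x, (t, x) ∈ K → (t, π x) ∈ K) ∧
      (∀ e ∈ D, ∀ b, (S.ends e b, S.val c e b) ∉ K → S.val c' e b = S.val c e b) ∧
      (∀ e ∈ D, ∀ b, (S.ends e b, S.val c e b) ∈ K → S.val c' e b = π (S.val c e b)) ∧
      (∀ t x, (t, x) ∈ K → (x ∈ S.miss D c' t ↔ π x ∈ S.miss D c t)) ∧
      (∀ t x, (t, x) ∉ K → (x ∈ S.miss D c' t ↔ x ∈ S.miss D c t)) ∧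
      ∀ q r : V × X, q.2 ∈ S.miss D c q.1 → r.2 ∈ S.miss D c r.1 → q ≠ p → r ≠ p → q ≠ r →
        q ∈ K → r ∉ K := by
  classical
  set H := S.kempeGraph D c π with hH
  let K : Set (V × X) := {q | H.Reachable p q}
  have hπnu : ∀ e x, π (S.nu e x) = S.nu e (π x) := by
    intro e x
    rcases S.nu_or e with h | h <;> simp [h, hneg]
  have hKπ : ∀ t x, (t, x) ∈ K → (t, π x) ∈ K := by
    intro t x hx
    by_cases hxx : π x = x
    · rwa [hxx]
    · refine SimpleGraph.Reachable.trans hx (SimpleGraph.Adj.reachable ?_)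
      rw [hH, kempeGraph_adj hπ]
      exact ⟨fun h => hxx (Prod.ext_iff.1 h).2.symm, Or.inl rfl⟩
  have hKe : ∀ e ∈ D, ∀ b, (S.ends e b, S.val c e b) ∈ K → (S.ends e !b, S.val c e !b) ∈ K := by
    intro e he b hx
    by_cases hxx : (S.ends e b, S.val c e b) = (S.ends e !b, S.val c e !b)
    · rwa [← hxx]
    · refine SimpleGraph.Reachable.trans hx (SimpleGraph.Adj.reachable ?_)
      rw [hH, kempeGraph_adj hπ]
      exact ⟨hxx, Or.inr ⟨e, he, b, rfl, rfl⟩⟩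
  have hKπ' : ∀ t x, (t, π x) ∈ K → (t, x) ∈ K := fun t x hx => by
    simpa [hπ] using hKπ t _ hx
  let c' : E → X := fun e => if (S.ends e true, c e) ∈ K then π (c e) else c e
  have hval : ∀ e ∈ D, ∀ b, S.val c' e b =
      if (S.ends e b, S.val c e b) ∈ K then π (S.val c e b) else S.val c e b := by
    intro e he b
    cases b
    · have h1 := hKe e he true
      have h2 := hKe e he false
      simp only [val, put, c'] at *
      simp only [Bool.not_true, Bool.not_false, Bool.false_eq_true, if_true, if_false] at *
      split_ifs <;> simp_all
    · simp [val, put, c']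
  have hval₁ : ∀ e ∈ D, ∀ b, (S.ends e b, S.val c e b) ∉ K → S.val c' e b = S.val c e b :=
    fun e he b hx => by rw [hval e he b, if_neg hx]
  have hval₂ : ∀ e ∈ D, ∀ b, (S.ends e b, S.val c e b) ∈ K → S.val c' e b = π (S.val c e b) :=
    fun e he b hx => by rw [hval e he b, if_pos hx]
  have hprop : S.Proper D c' := by
    intro e b e' b' he he' hends hv
    apply h.1 e b e' b' he he' hends
    rw [hval e he, hval e' he', hends] at hv
    split_ifs at hv with k1 k2 k2
    · simpa [hπ] using congrArg π hv
    · exact absurd (hv ▸ hKπ _ _ k1) k2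
    · exact absurd (hv ▸ hKπ _ _ k2) k1
    · exact hv
  refine ⟨K, c', ⟨hprop, h.2⟩, SimpleGraph.Reachable.refl _, hKπ, hval₁, hval₂, ?_, ?_, ?_⟩
  · intro t x hx
    rw [mem_miss, mem_miss]
    refine forall₂_congr fun e he => forall₂_congr fun b hb => not_congr ?_
    subst hb
    rw [hval e he]
    constructor
    · intro hv
      split_ifs at hv with k
      · rw [← hv, hπ]
      · exact absurd (hv ▸ hx) k
    · intro hv
      rw [if_pos (hv ▸ hKπ _ _ hx), hv, hπ]
  · intro t x hx
    rw [mem_miss, mem_miss]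
    refine forall₂_congr fun e he => forall₂_congr fun b hb => not_congr ?_
    subst hb
    rw [hval e he]
    constructor
    · intro hv
      split_ifs at hv with k
      · exact absurd (hv ▸ hKπ _ _ k) hx
      · exact hv
    · intro hv
      rw [if_neg (hv ▸ hx), hv]
  · intro q r hq hr hqp hrp hqr hqK hrK
    have hend : ∀ q : V × X, q.2 ∈ S.miss D c q.1 → ∃ r, ∀ s, H.Adj q s → s = r := by
      intro q hq
      refine ⟨(q.1, π q.2), fun s hs => ?_⟩
      rw [hH, kempeGraph_adj hπ] at hs
      rcases hs.2 with hs | ⟨e, he, b, h1, h2⟩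
      · exact hs
      · subst h1
        exact absurd rfl (S.mem_miss.1 hq e he b rfl)
    refine no_three_ends H ?_ (hend p hp) (hend q hq) (hend r hr) hqp.symm hrp.symm hqr hqK hrK
    intro q
    by_cases hq : q.2 ∈ S.miss D c q.1
    · obtain ⟨r, hr⟩ := hend q hq
      exact ⟨r, r, fun s hs => Or.inl (hr s hs)⟩
    · obtain ⟨f, hf, b, h1, h2⟩ := S.exists_of_not_mem_miss hq
      refine ⟨(q.1, π q.2), (S.ends f !b, S.val c f !b), fun s hs => ?_⟩
      rw [hH, kempeGraph_adj hπ] at hs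
      rcases hs.2 with hs | ⟨e, he, b', h3, h4⟩
      · exact Or.inl hs
      · right
        subst h3
        obtain ⟨rfl, rfl⟩ := h.1 f b e b' hf he h1 h2
        exact h4


/-! ### Counting missing values -/

theorem IsMax.not_mem {D : Finset E} {c : E → X} (h : S.IsMax D c) {e : E} {b : Bool}
    (he : e ∉ D) (hnl : S.ends e b ≠ S.ends e !b) {x : X} (hx : x ∈ S.miss D c (S.ends e b)) :
    S.nu e x ∉ S.miss D c (S.ends e !b) :=
  fun hx' => h.not_extend he b hx hx' fun h' => absurd h' hnl

theorem not_mem_miss {D : Finset E} {c : E → X} {e : E} (b : Bool) (he : e ∈ D) :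
    S.val c e b ∉ S.miss D c (S.ends e b) :=
  fun h => S.mem_miss.1 h e he b rfl rfl

/-- Every vertex has degree at most `Δ`. -/
def DegreeBound (S : SignedData V E X) (Δ : ℕ) : Prop :=
  ∀ t, (Finset.univ.filter fun p : E × Bool => S.ends p.1 p.2 = t).card ≤ Δ

theorem Proper.card_le {D : Finset E} {c : E → X} (h : S.Proper D c) {Δ : ℕ}
    (hΔ : S.DegreeBound Δ) (t : V) : Fintype.card X ≤ (S.miss D c t).card + Δ := by
  rw [← h.card_miss t]
  refine Nat.add_le_add_left (le_trans (Finset.card_le_card ?_) (hΔ t)) _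
  intro p hp
  simp_all

/-- An uncoloured half-edge at a vertex improves the lower bound `|X| - Δ` for the number of values
missing there by one. -/
theorem Proper.card_lt {D : Finset E} {c : E → X} (h : S.Proper D c) {Δ : ℕ}
    (hΔ : S.DegreeBound Δ) {e : E} (b : Bool) (he : e ∉ D) :
    Fintype.card X + 1 ≤ (S.miss D c (S.ends e b)).card + Δ := by
  rw [← h.card_miss (S.ends e b), add_assoc]
  refine Nat.add_le_add_left (le_trans (Nat.succ_le_of_lt (Finset.card_lt_card ?_))
    (hΔ (S.ends e b))) _
  rw [Finset.ssubset_iff_of_subset (fun p hp => by simp_all)]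
  exact ⟨(e, b), by simp, by simp [he]⟩

/-- Every loop is coloured: otherwise at least two values are missing at its vertex, hence one value
`z` with `-z ≠ z`. Either `-z` is missing too, or the half-edge with value `-z` belongs to an edge
that is not a loop (a loop would have value `z` at its other half-edge). After uncolouring that
edge the loop can be coloured with `z`, which increases the weight by one. -/
theorem IsMax.loop_mem {D : Finset E} {c : E → X} (h : S.IsMax D c) {Δ : ℕ}
    (hΔ : S.DegreeBound Δ) (hN : 3 * Δ ≤ 2 * Fintype.card X + 1) {e : E}
    (hl : S.ends e true = S.ends e false) : e ∈ D := by
  by_contra he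
  have hsub : ((Finset.univ.filter fun p : E × Bool => p.1 ∈ D ∧ S.ends p.1 p.2 = S.ends e true) ∪
      {(e, true), (e, false)}) ⊆
      Finset.univ.filter fun p : E × Bool => S.ends p.1 p.2 = S.ends e true := by
    intro p hp
    simp only [Finset.mem_union, Finset.mem_filter, Finset.mem_univ, true_and,
      Finset.mem_insert, Finset.mem_singleton] at hp ⊢
    rcases hp with hp | rfl | rfl
    · exact hp.2
    · rfl
    · exact hl.symm
  have hcard := (Finset.card_le_card hsub).trans (hΔ _)
  rw [Finset.card_union_of_disjoint (by
    rw [Finset.disjoint_left]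
    intro p hp hq
    simp only [Finset.mem_filter, Finset.mem_univ, true_and, Finset.mem_insert,
      Finset.mem_singleton] at hp hq
    rcases hq with rfl | rfl <;> exact he hp.1), Finset.card_pair (by simp)] at hcard
  have hmiss := h.1.card_miss (S.ends e true)
  obtain ⟨x, hx, y, hy, hxy⟩ := Finset.one_lt_card.1
    (show 1 < (S.miss D c (S.ends e true)).card by omega)
  -- At most one of `x`, `y` is self-inverse.
  obtain ⟨z, hz, hzz⟩ : ∃ z ∈ S.miss D c (S.ends e true), S.neg z ≠ z := by
    by_contra! hcon
    exact hxy (S.fix_unique x y (hcon x hx) (hcon y hy))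
  have hnu := S.nu_loop e hl
  have hz' : S.neg z ∉ S.miss D c (S.ends e true) := by
    intro h'
    refine h.not_extend he true (x := z) hz ?_ fun _ => ?_
    · rw [hnu, Bool.not_true, ← hl]
      exact h'
    · rw [hnu]
      exact hzz.symm
  obtain ⟨f, hf, b, hfe, hfz⟩ := S.exists_of_not_mem_miss hz'
  have hfl : ¬ S.ends f true = S.ends f false := by
    intro hfl
    have hfb := (S.loop_iff f b).2 hfl
    refine S.mem_miss.1 hz f hf (!b) (hfb.symm.trans hfe) ?_
    rw [S.val_not, hfz, S.nu_of_loop hfb, S.neg_neg]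
  have he' : e ∉ D.erase f := fun h => he (Finset.mem_of_mem_erase h)
  have hp := Proper.insert (h.1.mono (D.erase_subset f)) he' true (x := z)
    (miss_subset_erase f _ hz)
    (by
      rw [hnu, Bool.not_true, ← hl, ← hfe, ← hfz]
      exact h.1.mem_miss_erase hf)
    (fun _ => by rw [hnu]; exact hzz.symm)
  have hw := h.2 _ _ hp
  rw [weight_insert he', ← weight_erase hf, if_pos hl, if_neg hfl] at hw
  omega

/-- The Shannon configuration cannot occur: `e = uv` is uncoloured, `f = uw` with `w ≠ u, v` has at
`u` the value `α`, and `nu e α` is missing at `v`. The last three hypotheses ensure that `x` missing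
at `u` can be exchanged with any `a` for which `nu e a` is missing at `v` and `nu f a` at `w`, with
`α` left in place. -/
theorem IsMax.no_config {D : Finset E} {c : E → X} (h : S.IsMax D c) {Δ : ℕ}
    (hΔ : S.DegreeBound Δ) (hN : 3 * Δ ≤ 2 * Fintype.card X + 1) {e f : E} {b b' : Bool} {α : X}
    (he : e ∉ D) (hnl : S.ends e b ≠ S.ends e !b) (hα : S.nu e α ∈ S.miss D c (S.ends e !b))
    (hf : f ∈ D) (hfe : S.ends f b' = S.ends e b) (hfα : S.val c f b' = α)
    (hfl : S.ends f b' ≠ S.ends f !b') (hfv : S.ends f (!b') ≠ S.ends e !b)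
    (hpair : S.nu e (S.neg α) ∈ S.miss D c (S.ends e !b) → S.neg α = α)
    (hzero : ∀ a, S.nu e a ∈ S.miss D c (S.ends e !b) → S.neg a = a → a = α)
    (hc : ∃ x ∈ S.miss D c (S.ends e b), S.neg x ≠ x ∧ x ≠ S.neg α) : False := by
  obtain ⟨x, hx, hxx, hxα⟩ := hc
  have hαu : α ∉ S.miss D c (S.ends e b) := by
    rw [← hfα, ← hfe]
    exact not_mem_miss b' hf
  have hαw : S.nu f α ∉ S.miss D c (S.ends f !b') := by
    rw [← hfα, ← S.val_not]
    exact not_mem_miss _ hf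
  -- The only disjointness that needs a Kempe exchange; `x` is exchanged with `a`.
  have hBC : ∀ a, S.nu e a ∈ S.miss D c (S.ends e !b) → S.nu f a ∉ S.miss D c (S.ends f !b') := by
    intro a hav haw
    have haα : a ≠ α := fun h => hαw (h ▸ haw)
    have haa : S.neg a ≠ a := fun h => haα (hzero a hav h)
    have haα' : a ≠ S.neg α := fun h => haα (h.trans (hpair (h ▸ hav)))
    obtain ⟨π, hπ, hπn, hπx, hπfix⟩ := S.exists_swap haa hxx
    have hπα : π α = α := by
      refine hπfix α haα.symm (fun h => hαu (h ▸ hx)) (fun h => haα' ?_) (fun h => hxα ?_)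
      · rw [h, S.neg_neg]
      · rw [h, S.neg_neg]
    have hπeα : π (S.nu e α) = S.nu e α := by
      rcases S.nu_or e with h | h <;> simp [h, hπn, hπα]
    have hπa : π a = x := by rw [← hπx, hπ]
    obtain ⟨K, c', hmax, hpK, hKπ, hv₁, hv₂, hm₁, hm₂, hends⟩ :=
      h.kempe hπ hπn (S.ends e b, x) hx
    have haK : (S.ends e b, a) ∈ K := by
      have := hKπ _ _ hpK
      rwa [hπx] at this
    have hau : a ∈ S.miss D c' (S.ends e b) := by
      rw [hm₁ _ _ haK, hπa]
      exact hx
    by_cases hqK : (S.ends e (!b), S.nu e a) ∈ K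
    · have hrK : (S.ends f (!b'), S.nu f a) ∉ K := by
        refine hends (S.ends e (!b), S.nu e a) (S.ends f (!b'), S.nu f a) hav haw ?_ ?_ ?_ hqK
        · exact fun h => hnl (congrArg Prod.fst h).symm
        · exact fun h => hfl (hfe.trans (congrArg Prod.fst h).symm)
        · exact fun h => hfv (congrArg Prod.fst h).symm
      have hαv : S.nu e α ∈ S.miss D c' (S.ends e !b) := by
        by_cases hK : (S.ends e (!b), S.nu e α) ∈ K
        · rw [hm₁ _ _ hK, hπeα]
          exact hα
        · rwa [hm₂ _ _ hK]
      have hfα' : S.val c' f b' = α := by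
        by_cases hK : (S.ends f b', S.val c f b') ∈ K
        · rw [hv₂ f hf b' hK, hfα, hπα]
        · rw [hv₁ f hf b' hK, hfα]
      exact hmax.shift_disjoint he hnl hαv hf hfe hfα' hfl hfv hau ((hm₂ _ _ hrK).2 haw)
    · exact hmax.not_mem he hnl hau ((hm₂ _ _ hqK).2 hav)
  -- Three disjoint sets of values with `3 |X| - 3 Δ + 2 > |X|` elements in total.
  have hcA := h.1.card_lt hΔ b he
  have hcB := h.1.card_lt hΔ (!b) he
  have hcC := h.1.card_le hΔ (S.ends f !b')
  have hinj : ∀ g, Function.Injective (S.nu g) := fun g =>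
    Function.LeftInverse.injective (S.nu_nu g)
  rw [← Finset.card_image_of_injective _ (hinj e)] at hcB
  rw [← Finset.card_image_of_injective _ (hinj f)] at hcC
  have hdAB : Disjoint (S.miss D c (S.ends e b)) ((S.miss D c (S.ends e !b)).image (S.nu e)) := by
    rw [Finset.disjoint_left]
    intro y hy hy'
    obtain ⟨z, hz, rfl⟩ := Finset.mem_image.1 hy'
    exact h.not_mem he hnl hy (by rwa [S.nu_nu])
  have hdABC : Disjoint (S.miss D c (S.ends e b) ∪ (S.miss D c (S.ends e !b)).image (S.nu e))
      ((S.miss D c (S.ends f !b')).image (S.nu f)) := by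
    rw [Finset.disjoint_left]
    intro y hy hy'
    obtain ⟨z, hz, rfl⟩ := Finset.mem_image.1 hy'
    rcases Finset.mem_union.1 hy with hy | hy
    · exact h.shift_disjoint he hnl hα hf hfe hfα hfl hfv hy (by rwa [S.nu_nu])
    · obtain ⟨z', hz', hzz⟩ := Finset.mem_image.1 hy
      exact hBC (S.nu e z') (by rwa [S.nu_nu]) (by rwa [hzz, S.nu_nu])
  have htot := Finset.card_le_univ ((S.miss D c (S.ends e b) ∪
    (S.miss D c (S.ends e !b)).image (S.nu e)) ∪ (S.miss D c (S.ends f !b')).image (S.nu f))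
  rw [Finset.card_union_of_disjoint hdABC, Finset.card_union_of_disjoint hdAB] at htot
  omega

/-- The values missing at the two ends of an uncoloured edge are disjoint after transport. -/
theorem IsMax.card_add_card_le {D : Finset E} {c : E → X} (h : S.IsMax D c) {e : E} {b : Bool}
    (he : e ∉ D) (hnl : S.ends e b ≠ S.ends e !b) :
    (S.miss D c (S.ends e b)).card + (S.miss D c (S.ends e !b)).card ≤ Fintype.card X := by
  have hinj : Function.Injective (S.nu e) := Function.LeftInverse.injective (S.nu_nu e)
  rw [← Finset.card_image_of_injective (S.miss D c (S.ends e !b)) hinj,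
    ← Finset.card_union_of_disjoint]
  · exact Finset.card_le_univ _
  · rw [Finset.disjoint_left]
    intro y hy hy'
    obtain ⟨z, hz, rfl⟩ := Finset.mem_image.1 hy'
    exact h.not_mem he hnl hy (by rwa [S.nu_nu])

/-! ### Choosing a suitable edge -/

/-- A self-inverse value is missing at neither end of an uncoloured edge (`b` is arbitrary). If it
is missing at one end, then it occurs at the other, on an edge which has it at both of its ends.
That edge is thus neither a loop nor parallel to `e`, and `IsMax.no_config` applies. -/
theorem IsMax.no_zero {D : Finset E} {c : E → X} (h : S.IsMax D c) {Δ : ℕ}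
    (hΔ : S.DegreeBound Δ) (hN : 3 * Δ ≤ 2 * Fintype.card X + 1) {e : E} {b : Bool}
    (he : e ∉ D) (hnl : S.ends e b ≠ S.ends e !b) {z : X} (hz : S.neg z = z) :
    z ∉ S.miss D c (S.ends e !b) := by
  intro hzv
  have hzv' : S.nu e z ∈ S.miss D c (S.ends e !b) := by rwa [S.nu_fix e hz]
  have hzu : z ∉ S.miss D c (S.ends e b) := fun hzu => h.not_mem he hnl hzu hzv'
  obtain ⟨f, hf, b', hfe, hfz⟩ := S.exists_of_not_mem_miss hzu
  have hfz' : S.val c f (!b') = z := by rw [S.val_not, hfz, S.nu_fix f hz]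
  have hcA := h.1.card_lt hΔ b he
  obtain ⟨x, hx⟩ := Finset.card_pos.1
    (show 0 < (S.miss D c (S.ends e b)).card by
      have := Finset.card_le_univ (S.miss D c (S.ends e b)); omega)
  refine h.no_config hΔ hN he hnl hzv' hf hfe hfz ?_ ?_ (fun _ => hz)
    (fun a _ ha => S.fix_unique a z ha hz) ⟨x, hx, ?_, ?_⟩
  · intro hl
    have := (h.1 f b' f (!b') hf hf hl (hfz.trans hfz'.symm)).2
    simp at this
  · exact fun hl => S.mem_miss.1 hzv f hf _ hl hfz'
  · exact fun hxx => hzu (S.fix_unique x z hxx hz ▸ hx)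
  · rintro rfl
    exact hzu (hz ▸ hx)

/-- `T` contains no pair `±x` with `-x ≠ x`. -/
def NoPair (S : SignedData V E X) (T : Finset X) : Prop :=
  ∀ x ∈ T, S.neg x ∈ T → S.neg x = x

/-- Some maximal colouring has, at one of the two ends `u`, `v` of the uncoloured edge `e`, no missing
pair `±x`. If `±x` is missing at `u` and `±(nu e a)` at `v`, a Kempe exchange of `±x` with `±a`
starting at `(u, x)` must end at `(v, nu e a)`, hence leaves `-x` missing at `u`, while `a` replaces
`x`; so the number of missing pairs at `u` decreases. -/
theorem IsMax.exists_noPair {D : Finset E} {e : E} {b : Bool} (he : e ∉ D)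
    (hnl : S.ends e b ≠ S.ends e !b) (n : ℕ) : ∀ {c : E → X}, S.IsMax D c →
    ((S.miss D c (S.ends e b)).filter fun x =>
      S.neg x ∈ S.miss D c (S.ends e b) ∧ S.neg x ≠ x).card = n →
    ∃ c', S.IsMax D c' ∧
      (S.NoPair (S.miss D c' (S.ends e b)) ∨ S.NoPair (S.miss D c' (S.ends e !b))) := by
  induction n using Nat.strong_induction_on with
  | _ n ih =>
  intro c h hn
  by_cases hp : S.NoPair (S.miss D c (S.ends e b)) ∨ S.NoPair (S.miss D c (S.ends e !b))
  · exact ⟨c, h, hp⟩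
  push Not at hp
  obtain ⟨hA, hB⟩ := hp
  simp only [NoPair] at hA hB
  push Not at hA hB
  obtain ⟨x, hx, hx', hxx⟩ := hA
  obtain ⟨y, hy, hy', hyy⟩ := hB
  obtain ⟨a, rfl⟩ : ∃ a, y = S.nu e a := ⟨S.nu e y, (S.nu_nu e y).symm⟩
  rw [← S.nu_neg] at hy' hyy
  have haa : S.neg a ≠ a := fun h => hyy (congrArg _ h)
  have hau : a ∉ S.miss D c (S.ends e b) := fun h' => h.not_mem he hnl h' hy
  have hau' : S.neg a ∉ S.miss D c (S.ends e b) := fun h' => h.not_mem he hnl h' hy'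
  obtain ⟨π, hπ, hπn, hπx, hπfix⟩ := S.exists_swap haa hxx
  have hπa : π a = x := by rw [← hπx, hπ]
  obtain ⟨K, c', hmax, hpK, hKπ, hv₁, hv₂, hm₁, hm₂, hends⟩ :=
    h.kempe hπ hπn (S.ends e b, x) hx
  have haK : (S.ends e b, a) ∈ K := by
    have := hKπ _ _ hpK
    rwa [hπx] at this
  have hqK : (S.ends e (!b), S.nu e a) ∈ K := by
    by_contra hqK
    refine hmax.not_mem he hnl (x := a) ?_ ((hm₂ _ _ hqK).2 hy)
    rw [hm₁ _ _ haK, hπa]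
    exact hx
  -- `(u, x)` and `(v, nu e a)` are the two ends of `K`, so `(u, -x)` is not one.
  have hrK : (S.ends e b, S.neg x) ∉ K := by
    refine hends (S.ends e (!b), S.nu e a) (S.ends e b, S.neg x) hy hx' ?_ ?_ ?_ hqK
    · exact fun h => hnl (congrArg Prod.fst h).symm
    · exact fun h => hxx (congrArg Prod.snd h)
    · exact fun h => hnl (congrArg Prod.fst h).symm
  have hsK : (S.ends e b, S.neg a) ∉ K := by
    intro hs
    apply hrK
    have := hKπ _ _ hs
    rwa [hπn, hπa] at this
  have hxu : x ∉ S.miss D c' (S.ends e b) := by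
    rw [hm₁ _ _ hpK, hπx]
    exact hau
  have hau'' : S.neg a ∉ S.miss D c' (S.ends e b) := by
    rwa [hm₂ _ _ hsK]
  have hother : ∀ y, y ≠ a → y ≠ x → y ≠ S.neg a → y ≠ S.neg x →
      y ∈ S.miss D c' (S.ends e b) → y ∈ S.miss D c (S.ends e b) := by
    intro y h1 h2 h3 h4 hy
    by_cases hK : (S.ends e b, y) ∈ K
    · rw [hm₁ _ _ hK, hπfix y h1 h2 h3 h4] at hy
      exact hy
    · rwa [hm₂ _ _ hK] at hy
  refine ih _ ?_ hmax rfl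
  rw [← hn]
  apply Finset.card_lt_card
  rw [Finset.ssubset_iff_of_subset]
  · exact ⟨x, by simp [hx, hx', hxx], by simp [hxu]⟩
  · intro y hy
    simp only [Finset.mem_filter] at hy ⊢
    obtain ⟨hy₁, hy₂, hy₃⟩ := hy
    have n1 : y ≠ a := by rintro rfl; exact hau'' hy₂
    have n2 : y ≠ x := by rintro rfl; exact hxu hy₁
    have n3 : y ≠ S.neg a := by rintro rfl; exact hau'' hy₁
    have n4 : y ≠ S.neg x := by rintro rfl; rw [S.neg_neg] at hy₂; exact hxu hy₂
    have hnn := S.neg_neg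
    exact ⟨hother y n1 n2 n3 n4 hy₁, hother (S.neg y) (by grind) (by grind) (by grind) (by grind) hy₂,
      hy₃⟩

/-- At most one edge `f` parallel to `e` has at `u` a value `α` with `nu e α` missing at `v`. Given two,
`f` with `α` and `g` with `β`, both have the sign opposite to that of `e`. Shift the colour `α` from
`f` to `e`. Then `f` is uncoloured, and the edge `k` with value `-β` at `u` is, because of `g`,
neither a loop nor parallel to `f`, which is the configuration of `IsMax.no_config`. -/
theorem IsMax.no_two_parallel {D : Finset E} {c : E → X} (h : S.IsMax D c) {Δ : ℕ}
    (hΔ : S.DegreeBound Δ) (hN : 3 * Δ ≤ 2 * Fintype.card X + 1) {e f g : E} {b b₁ b₂ : Bool}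
    {α β : X} (he : e ∉ D) (hnl : S.ends e b ≠ S.ends e !b)
    (hα : S.nu e α ∈ S.miss D c (S.ends e !b)) (hβ : S.nu e β ∈ S.miss D c (S.ends e !b))
    (hf : f ∈ D) (hfe : S.ends f b₁ = S.ends e b) (hfα : S.val c f b₁ = α)
    (hfv : S.ends f (!b₁) = S.ends e !b)
    (hg : g ∈ D) (hge : S.ends g b₂ = S.ends e b) (hgβ : S.val c g b₂ = β)
    (hgv : S.ends g (!b₂) = S.ends e !b) : α = β := by
  by_contra hαβ
  have hzu : ∀ z, S.neg z = z → z ∉ S.miss D c (S.ends e b) := by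
    intro z hz
    have := h.no_zero hΔ hN (b := !b) he (by simpa using hnl.symm) hz
    simpa using this
  have hzv : ∀ z, S.neg z = z → z ∉ S.miss D c (S.ends e !b) := fun z hz =>
    h.no_zero hΔ hN he hnl hz
  -- An edge parallel to `e` whose value at `u` is transported by `e` to a missing one has the
  -- opposite sign.
  have hpar : ∀ k bk γ, k ∈ D → S.val c k bk = γ → S.ends k (!bk) = S.ends e (!b) →
      S.nu e γ ∈ S.miss D c (S.ends e !b) → ∀ x, S.nu k x = S.neg (S.nu e x) := by
    intro k bk γ hk hkγ hkv hγ
    have h1 : S.nu k γ ≠ S.nu e γ := by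
      intro h'
      refine S.mem_miss.1 hγ k hk _ hkv ?_
      rw [S.val_not, hkγ, h']
    intro x
    rcases S.nu_or k with hk' | hk' <;> rcases S.nu_or e with he' | he' <;>
      simp_all [S.neg_neg]
  have hnf := hpar f b₁ α hf hfα hfv hα
  have hng := hpar g b₂ β hg hgβ hgv hβ
  have hfl : S.ends f b₁ ≠ S.ends f !b₁ := by rw [hfe, hfv]; exact hnl
  have hfg : g ≠ f := by
    rintro rfl
    rcases eq_or_ne b₂ b₁ with rfl | hb
    · exact hαβ (hfα.symm.trans hgβ)
    · obtain rfl : b₂ = !b₁ := eq_not_of_ne hb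
      exact hnl (hge.symm.trans hfv)
  have hef : f ≠ e := fun h' => he (h' ▸ hf)
  have heg : g ≠ e := fun h' => he (h' ▸ hg)
  have h' := h.shift he hnl hα hf hfe hfα hfl
  set D' := insert e (D.erase f) with hD'
  set c' := Function.update c e (S.put e b α) with hc'
  have hfD' : f ∉ D' := by simp [hD', hef]
  have hgD' : g ∈ D' := by simp [hD', hfg, hg]
  have hgβ' : S.val c' g b₂ = β := by rw [hc', S.val_update_of_ne c heg, hgβ]
  have hgβ'' : S.val c' g (!b₂) = S.nu f β := by rw [S.val_not, hgβ', hng, hnf]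
  have hβv : S.nu f (S.neg β) ∈ S.miss D' c' (S.ends f !b₁) := by
    rw [hnf, S.nu_neg, S.neg_neg, hfv, mem_miss]
    intro k hk bk hkv
    rcases Finset.mem_insert.1 hk with rfl | hk
    · obtain rfl : bk = !b := by
        by_contra hb
        obtain rfl : bk = b := by cases b <;> cases bk <;> simp_all
        exact hnl hkv
      rw [hc', S.val_update_self_not]
      intro hh
      exact hαβ (by rw [← S.nu_nu k α, hh, S.nu_nu])
    · have hk := Finset.mem_of_mem_erase hk
      rw [hc', S.val_update_of_ne c (ne_of_mem_of_not_mem hk he)]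
      exact S.mem_miss.1 hβ k hk bk hkv
  have hβu : S.neg β ∉ S.miss D' c' (S.ends f b₁) := fun hh => h'.not_mem hfD' hfl hh hβv
  obtain ⟨k, hk, bk, hku, hkβ⟩ := S.exists_of_not_mem_miss hβu
  have hβ0 : S.neg β ≠ β := by
    intro hh
    rw [S.nu_fix e hh] at hβ
    exact hzv β hh hβ
  have hα0 : S.neg α ≠ α := by
    intro hh
    rw [S.nu_fix e hh] at hα
    exact hzv α hh hα
  have hcA := h.1.card_lt hΔ b he
  obtain ⟨x, hx⟩ := Finset.card_pos.1
    (show 0 < (S.miss D c (S.ends e b)).card by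
      have := Finset.card_le_univ (S.miss D c (S.ends e b)); omega)
  refine h'.no_config hΔ hN hfD' hfl hβv hk hku hkβ ?_ ?_ ?_ ?_ ⟨x, ?_, ?_, ?_⟩
  · intro hkl
    have h1 : S.val c' k (!bk) = β := by rw [S.val_not, hkβ, S.nu_of_loop hkl, S.neg_neg]
    obtain ⟨rfl, rfl⟩ := h'.1 k (!bk) g b₂ hk hgD' (by rw [← hkl, hku, hfe, hge])
      (h1.trans hgβ'.symm)
    exact hnl (by rw [← hge, ← hgv, Bool.not_not, hkl])
  · intro hkv
    have h1 : S.val c' k (!bk) ≠ S.nu f (S.neg β) := S.mem_miss.1 hβv k hk _ hkv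
    have h2 : S.val c' k (!bk) = S.nu f β := by
      rw [S.val_not, hkβ] at h1 ⊢
      rcases S.nu_or k with hk' | hk' <;> rcases S.nu_or f with hf' | hf'
      · exact absurd (by rw [hk', hf']) h1
      · rw [hk', hf']
      · rw [hk', hf', S.neg_neg]
      · exact absurd (by rw [hk', hf']) h1
    obtain ⟨rfl, hb⟩ := h'.1 k (!bk) g (!b₂) hk hgD' (by rw [hkv, hfv, hgv]) (h2.trans hgβ''.symm)
    obtain rfl : bk = b₂ := by simpa using hb
    exact hβ0 (hkβ.symm.trans hgβ')
  · intro hh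
    exfalso
    rw [S.neg_neg] at hh
    exact S.mem_miss.1 hh g hgD' (!b₂) (hgv.trans hfv.symm) hgβ''
  · intro a ha haa
    exfalso
    rw [S.nu_fix f haa, hfv] at ha
    obtain ⟨k', hk', bk', hkv', hka'⟩ := S.exists_of_not_mem_miss (hzv a haa)
    by_cases hkf : k' = f
    · subst hkf
      rcases eq_or_ne bk' b₁ with rfl | hb
      · exact hnl (hfe.symm.trans hkv')
      · obtain rfl : bk' = !b₁ := eq_not_of_ne hb
        rw [S.val_not, hfα] at hka'
        have : α = a := by rw [← S.nu_nu k' α, hka', S.nu_fix k' haa]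
        exact hα0 (this ▸ haa)
    · refine S.mem_miss.1 ha k' (by simp [hD', hkf, hk']) bk' hkv' ?_
      rw [hc', S.val_update_of_ne c (ne_of_mem_of_not_mem hk' he), hka']
  · rw [mem_miss] at hx ⊢
    intro k' hk' bk' hku'
    rcases Finset.mem_insert.1 hk' with rfl | hk'
    · obtain rfl : bk' = b := by
        by_contra hb
        obtain rfl : bk' = !b := eq_not_of_ne hb
        exact hnl (hfe ▸ hku'.symm)
      rw [hc', S.val_update_self, ← hfα]
      exact hx f hf b₁ hfe
    · have hk' := Finset.mem_of_mem_erase hk'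
      rw [hc', S.val_update_of_ne c (ne_of_mem_of_not_mem hk' he)]
      exact hx k' hk' bk' (hku'.trans hfe)
  · exact fun hxx => hzu x hxx hx
  · rw [S.neg_neg]
    exact fun hxβ => S.mem_miss.1 hx g hg b₂ hge (hgβ.trans hxβ.symm)

/-- Let `A` be the set of values missing at `u`, and `B` that of values missing at `v`, transported to
`u`. For every `α ∈ B` the edge with value `α` at `u` is a loop or parallel to `e`, and the latter
holds for at most one `α`. If `B` has no pairs `±y`, then `A`, `B` and the negatives of the loop
values in `B` are disjoint, which is too many values. -/
theorem IsMax.not_noPair {D : Finset E} {c : E → X} (h : S.IsMax D c) {Δ : ℕ}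
    (hΔ : S.DegreeBound Δ) (hN : 3 * Δ ≤ 2 * Fintype.card X + 1) {e : E} {b : Bool}
    (he : e ∉ D) (hnl : S.ends e b ≠ S.ends e !b) :
    ¬ S.NoPair (S.miss D c (S.ends e !b)) := by
  classical
  intro hnp
  have hzu : ∀ z, S.neg z = z → z ∉ S.miss D c (S.ends e b) := by
    intro z hz
    have := h.no_zero hΔ hN (b := !b) he (by simpa using hnl.symm) hz
    simpa using this
  have hzv : ∀ z, S.neg z = z → z ∉ S.miss D c (S.ends e !b) := fun z hz =>
    h.no_zero hΔ hN he hnl hz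
  have hinj : Function.Injective (S.nu e) := Function.LeftInverse.injective (S.nu_nu e)
  have hnp' : ∀ α, S.nu e α ∈ S.miss D c (S.ends e !b) →
      S.nu e (S.neg α) ∉ S.miss D c (S.ends e !b) := by
    intro α hα hα'
    rw [S.nu_neg] at hα'
    exact hzv _ (hnp _ hα hα') hα
  have hcA := h.1.card_lt hΔ b he
  have hcB := h.1.card_lt hΔ (!b) he
  have hcAB := h.card_add_card_le he hnl
  have hbad : ∀ α, S.nu e α ∈ S.miss D c (S.ends e !b) → ∃ f ∈ D, ∃ b', S.ends f b' = S.ends e b ∧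
      S.val c f b' = α ∧ (S.ends f b' = S.ends f (!b') ∨ S.ends f (!b') = S.ends e !b) := by
    intro α hα
    obtain ⟨f, hf, b', hfe, hfα⟩ := S.exists_of_not_mem_miss
      (fun hu => h.not_mem he hnl hu hα : α ∉ S.miss D c (S.ends e b))
    refine ⟨f, hf, b', hfe, hfα, ?_⟩
    by_contra! hcon
    obtain ⟨x, hx, hxα⟩ := Finset.exists_mem_ne
      (show 1 < (S.miss D c (S.ends e b)).card by omega) (S.neg α)
    refine h.no_config hΔ hN he hnl hα hf hfe hfα hcon.1 hcon.2 (fun hh => absurd hh (hnp' α hα))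
      (fun a ha haa => ?_) ⟨x, hx, fun hxx => hzu x hxx hx, hxα⟩
    rw [S.nu_fix e haa] at ha
    exact absurd ha (hzv a haa)
  -- The values at `u` of loops at `u`.
  let isLoop : X → Prop := fun α => ∃ f ∈ D, ∃ b', S.ends f b' = S.ends e b ∧
      S.val c f b' = α ∧ S.ends f b' = S.ends f !b'
  let B := (S.miss D c (S.ends e !b)).image (S.nu e)
  have hB : ∀ α, α ∈ B ↔ S.nu e α ∈ S.miss D c (S.ends e !b) := by
    intro α
    constructor
    · intro hα
      obtain ⟨y, hy, rfl⟩ := Finset.mem_image.1 hα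
      rwa [S.nu_nu]
    · intro hα
      exact Finset.mem_image.2 ⟨_, hα, S.nu_nu e α⟩
  have hBcard : B.card = (S.miss D c (S.ends e !b)).card := Finset.card_image_of_injective _ hinj
  have hP : (B.filter fun α => ¬ isLoop α).card ≤ 1 := by
    rw [Finset.card_le_one]
    intro α hα β hβ
    rw [Finset.mem_filter, hB] at hα hβ
    obtain ⟨f, hf, b₁, hfe, hfα, hf'⟩ := hbad α hα.1
    obtain ⟨g, hg, b₂, hge, hgβ, hg'⟩ := hbad β hβ.1
    have hf'' := hf'.resolve_left fun hl => hα.2 ⟨f, hf, b₁, hfe, hfα, hl⟩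
    have hg'' := hg'.resolve_left fun hl => hβ.2 ⟨g, hg, b₂, hge, hgβ, hl⟩
    exact h.no_two_parallel hΔ hN he hnl hα.1 hβ.1 hf hfe hfα hf'' hg hge hgβ hg''
  have hLP := Finset.card_filter_add_card_filter_not (s := B) isLoop
  have hnegcard : ((B.filter isLoop).image S.neg).card = (B.filter isLoop).card :=
    Finset.card_image_of_injective _ (Function.LeftInverse.injective S.neg_neg)
  have hd₁ : Disjoint B ((B.filter isLoop).image S.neg) := by
    rw [Finset.disjoint_left]
    intro α hα hα'
    obtain ⟨β, hβ, rfl⟩ := Finset.mem_image.1 hα'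
    rw [Finset.mem_filter, hB] at hβ
    rw [hB] at hα
    exact hnp' β hβ.1 hα
  have hd₂ : Disjoint (S.miss D c (S.ends e b)) (B ∪ (B.filter isLoop).image S.neg) := by
    rw [Finset.disjoint_left]
    intro α hα hα'
    rcases Finset.mem_union.1 hα' with hα' | hα'
    · exact h.not_mem he hnl hα ((hB α).1 hα')
    · obtain ⟨β, hβ, rfl⟩ := Finset.mem_image.1 hα'
      obtain ⟨f, hf, b', hfe, hfβ, hfl⟩ := (Finset.mem_filter.1 hβ).2
      refine S.mem_miss.1 hα f hf (!b') (hfl.symm.trans hfe) ?_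
      rw [S.val_not, hfβ, S.nu_of_loop hfl]
  have htot := Finset.card_le_univ (S.miss D c (S.ends e b) ∪ (B ∪ (B.filter isLoop).image S.neg))
  rw [Finset.card_union_of_disjoint hd₂, Finset.card_union_of_disjoint hd₁, hnegcard] at htot
  omega

/-- Shannon's theorem for abstract colours. -/
theorem exists_proper (S : SignedData V E X) {Δ : ℕ}
    (hΔ : S.DegreeBound Δ) (hN : 3 * Δ ≤ 2 * Fintype.card X + 1) :
    ∃ c : E → X, S.Proper Finset.univ c := by
  classical
  rcases isEmpty_or_nonempty E with hE | ⟨⟨e₀⟩⟩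
  · exact ⟨isEmptyElim, fun e => isEmptyElim e⟩
  have hpos : 0 < (Finset.univ.filter fun p : E × Bool => S.ends p.1 p.2 = S.ends e₀ true).card :=
    Finset.card_pos.2 ⟨(e₀, true), by simp⟩
  have hX : 0 < Fintype.card X := by
    have := hΔ (S.ends e₀ true)
    omega
  obtain ⟨x₀⟩ := Fintype.card_pos_iff.1 hX
  obtain ⟨D, hD, hDmax⟩ := Finset.exists_max_image
    (Finset.univ.filter fun D : Finset E => ∃ c, S.Proper D c) S.weight
    ⟨∅, by simpa using ⟨fun _ => x₀, fun e b e' b' he => by simp at he⟩⟩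
  obtain ⟨c, hc⟩ := (Finset.mem_filter.1 hD).2
  have h : S.IsMax D c := ⟨hc, fun D' c' h' => hDmax D' (by simpa using ⟨c', h'⟩)⟩
  suffices hu : D = Finset.univ from ⟨c, hu ▸ hc⟩
  rw [Finset.eq_univ_iff_forall]
  intro e
  by_contra he
  have hnl : S.ends e true ≠ S.ends e !true := fun hl => he (h.loop_mem hΔ hN hl)
  obtain ⟨c', h', hp | hp⟩ := IsMax.exists_noPair he hnl _ h rfl
  · exact h'.not_noPair hΔ hN (b := false) he hnl.symm hp
  · exact h'.not_noPair hΔ hN he hnl hp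

end SignedData

/-! ### Back to bidirections and symmetric sets -/

theorem symNeg_symNeg {t k : ℕ} (x : SymColor t k) : symNeg (symNeg x) = x := by
  rcases x with a | ⟨i, b⟩ <;> simp [symNeg]

theorem eq_of_symNeg_eq {t k : ℕ} (ht : t ≤ 1) {x y : SymColor t k} (hx : symNeg x = x)
    (hy : symNeg y = y) : x = y := by
  rcases x with a | ⟨i, b⟩
  · rcases y with a' | ⟨i', b'⟩
    · exact congrArg Sum.inl (Fin.ext (by omega))
    · simp [symNeg] at hy
  · simp [symNeg] at hx

/-- The two half-edges of a negative loop have equal values. -/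
theorem not_hasColoring_of_negative_loop {V E : Type*} [Fintype V] [Fintype E] [DecidableEq V]
    [DecidableEq E] (G : Multigraph V E) (σ : E → ℤˣ) {e : E}
    (hl : G.ends e true = G.ends e false) (hσ : σ e = -1) (t k : ℕ) :
    ¬ G.HasColoring σ t k := by
  rintro ⟨τ, hτ, c, hc⟩
  have hττ : τ e true = τ e false := by
    have h := hτ e
    rw [hσ, signOf, neg_inj] at h
    exact mul_eq_one_iff_eq_inv.1 h.symm |>.trans (Int.units_inv_eq_self _)
  exact hc e true e false (by simp) hl (by rw [hval, hval, hττ])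

/-- The transport of values along an edge in the symmetric set `S^t_{2k}`. Here `t ≤ 1`, so that there
is at most one self-inverse colour. -/
def toSignedData {V E : Type*} (G : Multigraph V E) (σ : E → ℤˣ) {t : ℕ} (k : ℕ) (ht : t ≤ 1)
    (hloop : ∀ e, G.ends e true = G.ends e false → σ e ≠ -1) :
    SignedData V E (SymColor t k) where
  ends := G.ends
  neg := symNeg
  nu e x := if σ e = 1 then symNeg x else x
  neg_neg := symNeg_symNeg
  fix_unique _ _ hx hy := eq_of_symNeg_eq ht hx hy
  nu_or e := by
    by_cases h : σ e = 1
    · exact Or.inr fun x => if_pos h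
    · exact Or.inl fun x => if_neg h
  nu_loop e he x := if_pos ((Int.units_eq_one_or (σ e)).resolve_right (hloop e he))

/-- The bidirection that is `1` on every half-edge `(e, true)` turns the colouring of
`SignedData.exists_proper` into an `S^t_{2k}`-colouring. -/
theorem hasColoring_of_no_negative_loop {V E : Type*} [Fintype V] [Fintype E] [DecidableEq V]
    [DecidableEq E] (G : Multigraph V E) (σ : E → ℤˣ)
    (hloop : ∀ e, G.ends e true = G.ends e false → σ e ≠ -1) {t k : ℕ} (ht : t ≤ 1)
    (hN : 3 * G.maxDegree ≤ 2 * (t + 2 * k) + 1) : G.HasColoring σ t k := by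
  have hcard : Fintype.card (SymColor t k) = t + 2 * k := by
    simp [mul_comm]
  have hΔ : (toSignedData G σ k ht hloop).DegreeBound G.maxDegree := fun v =>
    Finset.le_sup (f := fun v => G.degree v) (Finset.mem_univ v)
  obtain ⟨c, hc⟩ := SignedData.exists_proper _ hΔ (by rw [hcard]; exact hN)
  let τ : E → Bool → ℤˣ := fun e b => if b then 1 else -σ e
  have hval_eq : ∀ e b, hval τ c e b = (toSignedData G σ k ht hloop).val c e b := by
    intro e b
    cases b
    · rcases Int.units_eq_one_or (σ e) with h | h <;>
        simp [hval, τ, SignedData.val, SignedData.put, toSignedData, h]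
    · simp [hval, τ, SignedData.val, SignedData.put]
  refine ⟨τ, fun e => by simp [τ, signOf], c, fun e₁ b₁ e₂ b₂ hne hends hv => hne ?_⟩
  rw [hval_eq, hval_eq] at hv
  exact Prod.ext_iff.2
    (hc e₁ b₁ e₂ b₂ (Finset.mem_univ e₁) (Finset.mem_univ e₂) hends hv)

/-- **Shannon's bound for signed multigraphs.**
For every signed multigraph `(G, σ)`, `χ'(G, σ) ≤ ⌊(3/2)·Δ(G)⌋`. -/
theorem chromaticIndex_le_three_halves_maxDegree
    {V E : Type*} [Fintype V] [Fintype E] [DecidableEq V] [DecidableEq E]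
    (G : Multigraph V E) (σ : E → ℤˣ) :
    G.chromaticIndex σ ≤ 3 * G.maxDegree / 2 := by
  by_cases hloop : ∃ e, G.ends e true = G.ends e false ∧ σ e = -1
  · -- No colouring exists here, so `chiSub` is the infimum of the empty set, which is `0` in `ℕ`.
    obtain ⟨e, hl, hσ⟩ := hloop
    have h0 : G.chiSub σ 0 = 0 :=
      Nat.sInf_eq_zero.2 <| Or.inr <| Set.eq_empty_of_forall_notMem
        fun n ⟨k, _, hk⟩ => not_hasColoring_of_negative_loop G σ hl hσ 0 k hk
    exact (min_le_left _ _).trans (h0.le.trans (Nat.zero_le _))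
  · push Not at hloop
    -- Exactly `⌊3Δ/2⌋` colours are used, and their parity decides between `t = 0` and `t = 1`.
    set N := 3 * G.maxDegree / 2 with hN
    have hchi : G.chiSub σ (N % 2) ≤ N :=
      Nat.sInf_le ⟨N / 2, by omega, hasColoring_of_no_negative_loop G σ hloop (by omega) (by omega)⟩
    rcases Nat.mod_two_eq_zero_or_one N with h | h <;> rw [h] at hchi
    · exact (min_le_left _ _).trans hchi
    · exact (min_le_right _ _).trans hchi
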